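/- Let X and Y be path-connected metrizable topological spaces. Then TC(X × Y) ≤ TC(X) + TC(Y). -/

import Mathlib

open scoped ENNReal

/-- The (reduced) topological complexity of a space `X`: the least `n` (or `∞`) such that
`X × X` admits a cover by `n + 1` open sets, each carrying a continuous motion planner,
i.e. a continuous map `s : Uᵢ → P(X)` with `(s z) 0 = z.1` and `(s z) 1 = z.2`. -/
noncomputable def topComplexity (X : Type*) [TopologicalSpace X] : ℕ∞ :=
  sInf {n : ℕ∞ | ∃ m : ℕ, n = (m : ℕ∞) ∧
    ∃ U : Fin (m + 1) → Set (X × X), (∀ i, IsOpen (U i)) ∧ (⋃ i, U i) = Set.univ ∧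
      ∀ i, ∃ s : C(U i, C(unitInterval, X)),
        ∀ z : U i, (s z) 0 = (z : X × X).1 ∧ (s z) 1 = (z : X × X).2}

/-!
Replace finite open covers `U i` of `X × X` and `V j` of `Y × Y` carrying motion planners by
continuous functions `f i`, `g j` such that `f i` is positive only inside `U i`, `g j` only inside
`V j`, and at every point some `f i` and some `g j` are positive. At each point take the first `i`
with `0 < f i` and the first `j` with `0 < g j`. The motion planners on `U i` and `V j` combine
near the points with first pair `(i, j)`, and the `m + n + 1` possible values of `i + j` index the
new cover. The planners for one value of `i + j` can be glued because the points with first pairs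
`(i, j)` and `(k, l)`, where `i < k` and `l < j`, are separated by comparing `f i` with `g l`:
at the former `g l ≤ 0 < f i`, at the latter `f i ≤ 0 < g l`.
-/

open Set Topology
open scoped Function

section StaircaseCells

variable {Z ι κ : Type*}

/-- The cell at `(i, j)`: a neighbourhood of the set of points at which `i` is the first index with
`0 < f i` and `j` is the first index with `0 < g j`. Being first is relaxed to strict inequalities
between the functions, which makes cells open while cells at incomparable positions stay
disjoint. -/
def staircaseCell [LT ι] [LT κ] (f : ι → Z → ℝ) (g : κ → Z → ℝ) (i : ι) (j : κ) : Set Z :=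
  {z | 0 < f i z ∧ 0 < g j z ∧ (∀ k < i, f k z < g j z) ∧ ∀ l < j, g l z < f i z}

lemma isOpen_staircaseCell [LT ι] [LT κ] [Finite ι] [Finite κ] [TopologicalSpace Z]
    {f : ι → Z → ℝ} {g : κ → Z → ℝ} (hf : ∀ i, Continuous (f i)) (hg : ∀ j, Continuous (g j))
    (i : ι) (j : κ) : IsOpen (staircaseCell f g i j) := by
  simp only [staircaseCell, ofPred_and, ofPred_forall]
  exact (isOpen_lt continuous_const (hf i)).inter <| (isOpen_lt continuous_const (hg j)).inter <|
    (isOpen_iInter_of_finite fun k ↦ isOpen_iInter_of_finite fun _ ↦ isOpen_lt (hf k) (hg j)).inter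
    (isOpen_iInter_of_finite fun l ↦ isOpen_iInter_of_finite fun _ ↦ isOpen_lt (hg l) (hf i))

lemma disjoint_staircaseCell_of_lt_of_lt [LT ι] [LT κ] (f : ι → Z → ℝ) (g : κ → Z → ℝ)
    {i k : ι} {j l : κ} (hik : i < k) (hlj : l < j) :
    Disjoint (staircaseCell f g i j) (staircaseCell f g k l) :=
  disjoint_left.mpr fun _ ⟨_, _, _, hij⟩ ⟨_, _, hkl, _⟩ ↦ lt_asymm (hij l hlj) (hkl i hik)

lemma exists_mem_staircaseCell [Preorder ι] [Preorder κ] [WellFoundedLT ι] [WellFoundedLT κ]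
    {f : ι → Z → ℝ} {g : κ → Z → ℝ} {z : Z} (hf : ∃ i, 0 < f i z) (hg : ∃ j, 0 < g j z) :
    ∃ i j, z ∈ staircaseCell f g i j := by
  obtain ⟨i, hi⟩ := exists_minimal_of_wellFoundedLT (fun i ↦ 0 < f i z) hf
  obtain ⟨j, hj⟩ := exists_minimal_of_wellFoundedLT (fun j ↦ 0 < g j z) hg
  exact ⟨i, j, hi.prop, hj.prop,
    fun k hk ↦ (not_lt.mp (hi.not_prop_of_lt hk)).trans_lt hj.prop,
    fun l hl ↦ (not_lt.mp (hj.not_prop_of_lt hl)).trans_lt hi.prop⟩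

lemma pairwise_disjoint_staircaseCell_antidiagonal {m n : ℕ} (f : Fin m → Z → ℝ)
    (g : Fin n → Z → ℝ) (k : ℕ) :
    Pairwise (Disjoint on fun c : {c : Fin m × Fin n // (c.1 : ℕ) + c.2 = k} ↦
      staircaseCell f g c.1.1 c.1.2) := by
  rintro ⟨⟨i, j⟩, hij⟩ ⟨⟨i', j'⟩, hij'⟩ hne
  dsimp only at hij hij'
  obtain ⟨hi, hj⟩ | ⟨hi, hj⟩ : (i < i' ∧ j' < j) ∨ (i' < i ∧ j < j') := by
    simp only [ne_eq, Subtype.mk.injEq, Prod.mk.injEq, Fin.ext_iff] at hne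
    simp only [Fin.lt_def]
    omega
  · exact disjoint_staircaseCell_of_lt_of_lt f g hi hj
  · exact (disjoint_staircaseCell_of_lt_of_lt f g hi hj).symm

end StaircaseCells

lemma exists_continuous_pos_subordinate {Z ι : Type*} [TopologicalSpace Z] [NormalSpace Z]
    [Finite ι] {U : ι → Set Z} (hU : ∀ i, IsOpen (U i)) (hcover : ⋃ i, U i = univ) :
    ∃ f : ι → C(Z, ℝ), (∀ i, {z | 0 < f i z} ⊆ U i) ∧ ∀ z, ∃ i, 0 < f i z := by
  obtain ⟨f, hf⟩ := PartitionOfUnity.exists_isSubordinate_of_locallyFinite isClosed_univ U hU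
    (locallyFinite_of_finite U) hcover.ge
  exact ⟨f, fun i _ hz ↦ hf i (subset_tsupport _ (ne_of_gt hz)), fun z ↦ f.exists_pos (mem_univ z)⟩

/-- The set `U` of pairs of endpoints carries a continuous motion planner, i.e. the endpoint
fibration `P(X) → X × X` has a continuous section over `U`. -/
def HasMotionPlanner {X : Type*} [TopologicalSpace X] (U : Set (X × X)) : Prop :=
  ∃ s : C(U, C(unitInterval, X)), ∀ z : U, s z 0 = (z : X × X).1 ∧ s z 1 = (z : X × X).2

namespace HasMotionPlanner

variable {X Y : Type*} [TopologicalSpace X] [TopologicalSpace Y]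

lemma mono {U V : Set (X × X)} (hV : HasMotionPlanner V) (hUV : U ⊆ V) : HasMotionPlanner U := by
  obtain ⟨s, hs⟩ := hV
  exact ⟨s.comp (.inclusion hUV), fun z ↦ hs (inclusion hUV z)⟩

lemma prod {U : Set (X × X)} {V : Set (Y × Y)} (hU : HasMotionPlanner U)
    (hV : HasMotionPlanner V) :
    HasMotionPlanner {z : (X × Y) × (X × Y) | (z.1.1, z.2.1) ∈ U ∧ (z.1.2, z.2.2) ∈ V} := by
  obtain ⟨s, hs⟩ := hU
  obtain ⟨t, ht⟩ := hV
  let planner : C({z : (X × Y) × (X × Y) | (z.1.1, z.2.1) ∈ U ∧ (z.1.2, z.2.2) ∈ V},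
      C(unitInterval, X × Y)) := ContinuousMap.curry
    ⟨fun p ↦ (s ⟨_, p.1.2.1⟩ p.2, t ⟨_, p.1.2.2⟩ p.2), by fun_prop⟩
  exact ⟨planner, fun z ↦
    ⟨Prod.ext (hs ⟨_, z.2.1⟩).1 (ht ⟨_, z.2.2⟩).1, Prod.ext (hs ⟨_, z.2.1⟩).2 (ht ⟨_, z.2.2⟩).2⟩⟩

lemma iUnion {ι : Type*} {U : ι → Set (X × X)} (hopen : ∀ i, IsOpen (U i))
    (hdisj : Pairwise (Disjoint on U)) (hU : ∀ i, HasMotionPlanner (U i)) :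
    HasMotionPlanner (⋃ i, U i) := by
  choose s hs using hU
  let piece (i : ι) : Set (⋃ i, U i) := Subtype.val ⁻¹' U i
  let planner (i : ι) : C(piece i, C(unitInterval, X)) :=
    (s i).comp ⟨fun z ↦ ⟨z.1.1, z.2⟩, by fun_prop⟩
  have planner_eq (i j z) (hi : z ∈ piece i) (hj : z ∈ piece j) :
      planner i ⟨z, hi⟩ = planner j ⟨z, hj⟩ := by
    obtain rfl : i = j := hdisj.eq (not_disjoint_iff.mpr ⟨z, hi, hj⟩)
    rfl
  have piece_mem_nhds (z : ⋃ i, U i) : ∃ i, piece i ∈ 𝓝 z := by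
    obtain ⟨i, hi⟩ := mem_iUnion.mp z.2
    exact ⟨i, ((hopen i).preimage continuous_subtype_val).mem_nhds hi⟩
  refine ⟨.liftCover piece planner planner_eq piece_mem_nhds, fun z ↦ ?_⟩
  obtain ⟨i, hi⟩ := mem_iUnion.mp z.2
  rw [ContinuousMap.liftCover_coe (i := i) (⟨z, hi⟩ : piece i)]
  exact hs i ⟨z, hi⟩

end HasMotionPlanner

section TopComplexity

variable {X Y : Type*} [TopologicalSpace X] [TopologicalSpace Y]

theorem topComplexity_le_natCast_iff {n : ℕ} :
    topComplexity X ≤ n ↔ ∃ U : Fin (n + 1) → Set (X × X),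
      (∀ i, IsOpen (U i)) ∧ ⋃ i, U i = univ ∧ ∀ i, HasMotionPlanner (U i) := by
  refine ⟨fun h ↦ ?_, fun h ↦ sInf_le ⟨n, rfl, h⟩⟩
  obtain ⟨_, ⟨m, rfl, U, hopen, hcover, hU⟩, hmn⟩ :=
    sInf_lt_iff.mp (h.trans_lt (ENat.natCast_lt_natCast.mpr n.lt_succ_self))
  have hmn : m ≤ n := Nat.lt_succ_iff.mp (ENat.natCast_lt_natCast.mp hmn)
  have clamp_surjective : Function.Surjective fun i : Fin (n + 1) ↦ Fin.clamp i m := fun i ↦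
    ⟨⟨i, by omega⟩, Fin.ext (min_eq_left (Nat.lt_succ_iff.mp i.2))⟩
  exact ⟨fun i ↦ U (.clamp i m), fun i ↦ hopen _, (clamp_surjective.iUnion_comp U).trans hcover,
    fun i ↦ hU _⟩

theorem topComplexity_prod_le_natCast_add [NormalSpace (X × X)] [NormalSpace (Y × Y)] {m n : ℕ}
    (hX : topComplexity X ≤ m) (hY : topComplexity Y ≤ n) :
    topComplexity (X × Y) ≤ (m + n : ℕ) := by
  obtain ⟨U, hUopen, hUcover, hU⟩ := topComplexity_le_natCast_iff.mp hX
  obtain ⟨V, hVopen, hVcover, hV⟩ := topComplexity_le_natCast_iff.mp hY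
  obtain ⟨f, hfU, hfpos⟩ := exists_continuous_pos_subordinate hUopen hUcover
  obtain ⟨g, hgV, hgpos⟩ := exists_continuous_pos_subordinate hVopen hVcover
  let cell : Fin (m + 1) → Fin (n + 1) → Set ((X × Y) × (X × Y)) :=
    staircaseCell (fun i z ↦ f i (z.1.1, z.2.1)) (fun j z ↦ g j (z.1.2, z.2.2))
  have cell_open (i j) : IsOpen (cell i j) :=
    isOpen_staircaseCell (fun _ ↦ by fun_prop) (fun _ ↦ by fun_prop) i j
  have cell_planner (i j) : HasMotionPlanner (cell i j) :=
    ((hU i).prod (hV j)).mono fun _ ⟨hf, hg, _⟩ ↦ ⟨hfU i hf, hgV j hg⟩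
  refine topComplexity_le_natCast_iff.mpr ⟨fun k ↦
    ⋃ c : {c : Fin (m + 1) × Fin (n + 1) // (c.1 : ℕ) + c.2 = k}, cell c.1.1 c.1.2,
    fun k ↦ isOpen_iUnion fun c ↦ cell_open _ _, eq_univ_of_forall fun z ↦ ?_,
    fun k ↦ .iUnion (fun c ↦ cell_open _ _)
      (pairwise_disjoint_staircaseCell_antidiagonal _ _ k) fun c ↦ cell_planner _ _⟩
  obtain ⟨i, j, hz⟩ : ∃ i j, z ∈ cell i j := exists_mem_staircaseCell (hfpos _) (hgpos _)
  exact mem_iUnion.mpr ⟨⟨i + j, by omega⟩, mem_iUnion.mpr ⟨⟨(i, j), rfl⟩, hz⟩⟩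

theorem topComplexity_prod_le_general [NormalSpace (X × X)] [NormalSpace (Y × Y)] :
    topComplexity (X × Y) ≤ topComplexity X + topComplexity Y := by
  cases hX : topComplexity X using ENat.recTopCoe with
  | top => simp only [top_add, le_top]
  | coe m =>
    cases hY : topComplexity Y using ENat.recTopCoe with
    | top => simp only [add_top, le_top]
    | coe n => exact_mod_cast topComplexity_prod_le_natCast_add hX.le hY.le

end TopComplexity

/-- For path-connected metrizable spaces `X` and `Y`, `TC (X × Y) ≤ TC X + TC Y`. -/
theorem topComplexity_prod_le
    {X Y : Type*} [TopologicalSpace X] [TopologicalSpace Y]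
    [TopologicalSpace.MetrizableSpace X] [TopologicalSpace.MetrizableSpace Y]
    [PathConnectedSpace X] [PathConnectedSpace Y] :
    topComplexity (X × Y) ≤ topComplexity X + topComplexity Y :=
  topComplexity_prod_le_general
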